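/- arXiv:1402.0067 — 2 statements merged into one kernel-verified Lean document; each statement's English description precedes it below -/
import Mathlib

section
/- Suppose that every countable graph G=(V,E) with the following properties admits an unfriendly partition: there is a partition V = V¹ ∪ V² such that each element of V¹ has finitely many neighbours in V¹, each element of V² has infinitely many neighbours in V¹, and, writing V^F for the set of vertices of finite degree, there is no edge {x,y} with x,y ∈ V¹−V^F and no edge {x,y} with x,y ∈ V². Then every graph has an ω-unfriendly partition. -/
open Cardinal

universe u

/-- `π` is an unfriendly partition of `G`. -/
def UnfriendlyPartition {V : Type u} (G : SimpleGraph V) (π : V → Fin 2) : Prop :=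
  ∀ x : V, #{y : V // G.Adj x y ∧ π y = π x} ≤ #{y : V // G.Adj x y ∧ π y ≠ π x}

/-- `π` is an ω-unfriendly partition of `G`: for each vertex `x`, the set of neighbours in the
opposite class is infinite, or at least as large as the set of neighbours in the same class. -/
def OmegaUnfriendlyPartition {V : Type u} (G : SimpleGraph V) (π : V → Fin 2) : Prop :=
  ∀ x : V, {y : V | G.Adj x y ∧ π y ≠ π x}.Infinite ∨
    #{y : V // G.Adj x y ∧ π y = π x} ≤ #{y : V // G.Adj x y ∧ π y ≠ π x}

/-- The vertices of the auxiliary graph: the original ones, the blocks and the ports. -/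
inductive GW (X : Type u) : Type u
  | base (x : X) : GW X
  | blk (n i : ℕ) : GW X
  | port (n : ℕ) : GW X

theorem GW.countable (X : Type u) [Countable X] : Countable (GW X) := by
  let f : GW X → X ⊕ ((ℕ × ℕ) ⊕ ℕ) := fun w => match w with
    | .base x => Sum.inl x
    | .blk n i => Sum.inr (Sum.inl (n, i))
    | .port n => Sum.inr (Sum.inr n)
  have hf : Function.Injective f := by
    intro a b h
    cases a <;> cases b <;> simp_all [f]
  exact hf.countable

theorem GW.base_inj {X : Type u} : Function.Injective (GW.base : X → GW X) := by
  intro a b h; cases h; rfl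
theorem GW.port_inj {X : Type u} : Function.Injective (GW.port : ℕ → GW X) := by
  intro a b h; cases h; rfl
theorem GW.blk_inj {X : Type u} (n : ℕ) : Function.Injective (GW.blk n : ℕ → GW X) := by
  intro a b h; cases h; rfl

/-- Adjacency of the auxiliary graph. -/
def GWAdj {X : Type u} (G : SimpleGraph X) (T : ℕ → X → Prop) : GW X → GW X → Prop
  | .base x, .base y => G.Adj x y
  | .base x, .port n => T n x
  | .port n, .base x => T n x
  | .blk n i, .blk m j => (m = n + 1 ∨ n = m + 1) ∧ i < 2 * n + 2 ∧ j < 2 * m + 2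
  | .blk n i, .port m => n = m ∧ i < 2 * n + 2
  | .port m, .blk n i => n = m ∧ i < 2 * n + 2
  | _, _ => False

/-- The auxiliary graph. -/
def GWGraph {X : Type u} (G : SimpleGraph X) (T : ℕ → X → Prop) : SimpleGraph (GW X) where
  Adj := GWAdj G T
  symm := ⟨by
    intro a b h
    cases a <;> cases b <;> simp only [GWAdj] at h ⊢
    · exact h.symm
    · exact h
    · omega
    · exact h
    · exact h
    · exact h⟩
  loopless := ⟨by
    intro a h
    cases a <;> simp [GWAdj] at h⟩

section gadget
variable {X : Type u} (G : SimpleGraph X) (T : ℕ → X → Prop)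

theorem nb_blk (n i : ℕ) (hi : i < 2 * n + 2) :
    (GWGraph G T).neighborSet (.blk n i) =
      (GW.blk (n - 1) '' Set.Iio (2 * n) ∪ GW.blk (n + 1) '' Set.Iio (2 * n + 4)) ∪ {.port n} := by
  ext w
  cases w with
  | base x => simp [GWGraph, GWAdj]
  | port m => simp [GWGraph, GWAdj]; omega
  | blk m j => simp [GWGraph, GWAdj]; omega

theorem nb_blk' (n i : ℕ) (hi : ¬ i < 2 * n + 2) :
    (GWGraph G T).neighborSet (.blk n i) = ∅ := by
  ext w
  cases w with
  | base x => simp [GWGraph, GWAdj]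
  | port m => simp [GWGraph, GWAdj]; omega
  | blk m j => simp [GWGraph, GWAdj]; omega

theorem nb_port (n : ℕ) :
    (GWGraph G T).neighborSet (.port n) =
      GW.blk n '' Set.Iio (2 * n + 2) ∪ GW.base '' {x | T n x} := by
  ext w
  cases w with
  | base x => simp [GWGraph, GWAdj]
  | port m => simp [GWGraph, GWAdj]
  | blk m j => simp [GWGraph, GWAdj]; grind

theorem nb_base (x : X) :
    (GWGraph G T).neighborSet (.base x) =
      GW.base '' G.neighborSet x ∪ GW.port '' {n | T n x} := by
  ext w
  cases w <;> simp [GWGraph, GWAdj]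

theorem fin_blk (n i : ℕ) : ((GWGraph G T).neighborSet (.blk n i)).Finite := by
  by_cases hi : i < 2 * n + 2
  · rw [nb_blk G T n i hi]
    exact (((Set.finite_Iio _).image _).union ((Set.finite_Iio _).image _)).union
      (Set.finite_singleton _)
  · rw [nb_blk' G T n i hi]; exact Set.finite_empty

theorem fin_port (hT : ∀ n, {x | T n x}.Subsingleton) (n : ℕ) :
    ((GWGraph G T).neighborSet (.port n)).Finite := by
  rw [nb_port]
  exact ((Set.finite_Iio _).image _).union ((hT n).finite.image _)

end gadget

theorem unf_fin {V : Type u} {G : SimpleGraph V} {π : V → Fin 2} (h : UnfriendlyPartition G π)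
    (x : V) (hx : (G.neighborSet x).Finite) :
    (G.neighborSet x ∩ {y | π y = π x}).ncard ≤ (G.neighborSet x ∩ {y | π y ≠ π x}).ncard := by
  have h1 := h x
  have f2 : (G.neighborSet x ∩ {y | π y ≠ π x}).Finite := hx.subset Set.inter_subset_left
  have := Cardinal.toNat_le_toNat h1 (by
    have : Finite {y : V // G.Adj x y ∧ π y ≠ π x} := f2.to_subtype
    exact Cardinal.lt_aleph0_of_finite _)
  exact this

theorem unf_inf {V : Type u} {G : SimpleGraph V} {π : V → Fin 2} (h : UnfriendlyPartition G π)
    (x : V) (hx : (G.neighborSet x).Infinite) :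
    (G.neighborSet x ∩ {y | π y ≠ π x}).Infinite := by
  intro hf
  apply hx
  have h1 := h x
  have : Finite {y : V // G.Adj x y ∧ π y ≠ π x} := hf.to_subtype
  have h2 := h1.trans_lt (Cardinal.lt_aleph0_of_finite {y : V // G.Adj x y ∧ π y ≠ π x})
  have h3 : (G.neighborSet x ∩ {y | π y = π x}).Finite := by
    rw [Cardinal.lt_aleph0_iff_finite] at h2
    exact Set.finite_coe_iff.mp h2
  refine (hf.union h3).subset ?_
  intro y hy
  by_cases hc : π y = π x
  · exact Or.inr ⟨hy, hc⟩
  · exact Or.inl ⟨hy, hc⟩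

theorem fin2_split {α : Type*} (S : Set α) (hS : S.Finite) (π : α → Fin 2) (c : Fin 2) :
    (S ∩ {y | π y = c}).ncard + (S ∩ {y | π y ≠ c}).ncard = S.ncard := by
  rw [← Set.ncard_inter_add_ncard_sdiff_eq_ncard S {y | π y = c} hS]
  rfl

section gadget2
variable {X : Type u} {G : SimpleGraph X} {T : ℕ → X → Prop} {π : GW X → Fin 2}

theorem nb_blk_card (n : ℕ) :
    ((GW.blk (n - 1) '' Set.Iio (2 * n) ∪ GW.blk (n + 1) '' Set.Iio (2 * n + 4)) ∪ {.port n} :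
      Set (GW X)).ncard = 4 * n + 5 := by
  rw [Set.ncard_union_eq, Set.ncard_union_eq, Set.ncard_image_of_injective _ (GW.blk_inj _),
    Set.ncard_image_of_injective _ (GW.blk_inj _)]
  · simp; omega
  · rw [Set.disjoint_left]; rintro w ⟨i, _, rfl⟩ ⟨j, _, h⟩
    injection h; omega
  · rw [Set.disjoint_left]; rintro w (⟨i, _, rfl⟩ | ⟨i, _, rfl⟩) h <;> simp at h

theorem blk_unif (h : UnfriendlyPartition (GWGraph G T) π) (n i : ℕ) (hi : i < 2 * n + 2) :
    π (.blk n i) = π (.blk n 0) := by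
  by_contra hne
  have h1 := unf_fin h (.blk n i) (fin_blk G T n i)
  have h0 := unf_fin h (.blk n 0) (fin_blk G T n 0)
  have f := fin_blk G T n 0
  rw [nb_blk G T n i hi] at h1
  rw [nb_blk G T n 0 (by omega)] at h0 f
  have s0 := fin2_split _ f π (π (.blk n 0))
  rw [nb_blk_card] at s0
  generalize ((GW.blk (n - 1) '' Set.Iio (2 * n) ∪ GW.blk (n + 1) '' Set.Iio (2 * n + 4)) ∪
    {.port n} : Set (GW X)) = S at *
  have e1 : {y | π y = π (.blk n i)} = {y | π y ≠ π (.blk n 0)} := by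
    ext y; simp only [Set.mem_ofPred_eq]; omega
  have e2 : {y | π y ≠ π (.blk n i)} = {y | π y = π (.blk n 0)} := by
    ext y; simp only [Set.mem_ofPred_eq]; omega
  rw [e1, e2] at h1
  omega

theorem blk_succ (h : UnfriendlyPartition (GWGraph G T) π) (n : ℕ) :
    π (.blk (n + 1) 0) ≠ π (.blk n 0) := by
  intro heq
  have h0 := unf_fin h (.blk n 0) (fin_blk G T n 0)
  have f := fin_blk G T n 0
  rw [nb_blk G T n 0 (by omega)] at h0 f
  have s0 := fin2_split _ f π (π (.blk n 0))
  rw [nb_blk_card] at s0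
  have : (GW.blk (n + 1) '' Set.Iio (2 * n + 4) : Set (GW X)).ncard ≤ _ :=
    Set.ncard_le_ncard (t := ((GW.blk (n - 1) '' Set.Iio (2 * n) ∪
      GW.blk (n + 1) '' Set.Iio (2 * n + 4)) ∪
      {.port n}) ∩ {y | π y = π (.blk n 0)}) (by
      rintro _ ⟨i, hi, rfl⟩
      refine ⟨Or.inl (Or.inr ⟨i, hi, rfl⟩), ?_⟩
      simp only [Set.mem_ofPred_eq]
      rw [← heq]
      exact blk_unif h (n + 1) i (by simp at hi; omega)) (f.subset Set.inter_subset_left)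
  rw [Set.ncard_image_of_injective _ (GW.blk_inj _)] at this
  simp only [Set.ncard_Iio_nat] at this
  omega

theorem port_ne (hT : ∀ n, {x | T n x}.Subsingleton)
    (h : UnfriendlyPartition (GWGraph G T) π) (n : ℕ) :
    π (.port n) ≠ π (.blk n 0) := by
  intro heq
  have h0 := unf_fin h (.port n) (fin_port G T hT n)
  have f := fin_port G T hT n
  rw [nb_port] at h0 f
  have a1 : (GW.blk n '' Set.Iio (2 * n + 2) : Set (GW X)).ncard ≤ _ :=
    Set.ncard_le_ncard (t := (GW.blk n '' Set.Iio (2 * n + 2) ∪ GW.base '' {x | T n x}) ∩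
      {y | π y = π (.port n)}) (by
      rintro _ ⟨i, hi, rfl⟩
      refine ⟨Or.inl ⟨i, hi, rfl⟩, ?_⟩
      simp only [Set.mem_ofPred_eq]
      rw [heq]
      exact blk_unif h n i hi) (f.subset Set.inter_subset_left)
  have a2 : ((GW.blk n '' Set.Iio (2 * n + 2) ∪ GW.base '' {x | T n x}) ∩
      {y | π y ≠ π (.port n)}).ncard ≤ (GW.base '' {x | T n x} : Set (GW X)).ncard :=
    Set.ncard_le_ncard (by
      rintro _ ⟨(⟨i, hi, rfl⟩ | hy), hne⟩
      · exact absurd ((blk_unif h n i hi).trans heq.symm) hne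
      · exact hy) ((hT n).finite.image _)
  rw [Set.ncard_image_of_injective _ (GW.blk_inj _)] at a1
  rw [Set.ncard_image_of_injective _ GW.base_inj] at a2
  have a3 : {x | T n x}.ncard ≤ 1 := by
    rw [Set.ncard_le_one (hT n).finite]
    intro a ha b hb; exact hT n ha hb
  simp only [Set.ncard_Iio_nat] at a1
  omega

theorem port_col (hT : ∀ n, {x | T n x}.Subsingleton)
    (h : UnfriendlyPartition (GWGraph G T) π) (n : ℕ) :
    (π (.port n)).val = ((π (.port 0)).val + n) % 2 := by
  induction n with
  | zero => omega
  | succ n ih =>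
    have h1 := port_ne hT h n
    have h2 := port_ne hT h (n + 1)
    have h3 := blk_succ h n
    omega
end gadget2

theorem biased
    (hyp : ∀ (V : Type u) (G : SimpleGraph V), Countable V →
      (∃ V1 V2 : Set V, V1 ∪ V2 = Set.univ ∧ Disjoint V1 V2 ∧
        (∀ x ∈ V1, (G.neighborSet x ∩ V1).Finite) ∧
        (∀ x ∈ V2, (G.neighborSet x ∩ V1).Infinite) ∧
        (∀ x y : V, G.Adj x y →
          ¬(x ∈ V1 \ {z : V | (G.neighborSet z).Finite} ∧
            y ∈ V1 \ {z : V | (G.neighborSet z).Finite})) ∧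
        (∀ x y : V, G.Adj x y → ¬(x ∈ V2 ∧ y ∈ V2))) →
      ∃ π : V → Fin 2, UnfriendlyPartition G π)
    (X : Type u) [Countable X] (G : SimpleGraph X) (V1 V2 : Set X)
    (hu : V1 ∪ V2 = Set.univ) (hd : Disjoint V1 V2)
    (h1 : ∀ x ∈ V1, (G.neighborSet x ∩ V1).Finite)
    (h2 : ∀ x ∈ V2, (G.neighborSet x ∩ V1).Infinite)
    (h11 : ∀ x y : X, G.Adj x y → x ∈ V1 → (G.neighborSet x).Infinite →
      y ∈ V1 → (G.neighborSet y).Infinite → False)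
    (h22 : ∀ x y : X, G.Adj x y → x ∈ V2 → y ∈ V2 → False)
    (a : Fin 2 → X → ℕ) :
    ∃ ρ : X → Fin 2, ∀ x,
      ((G.neighborSet x).Infinite → (G.neighborSet x ∩ {y | ρ y ≠ ρ x}).Infinite) ∧
      ((G.neighborSet x).Finite →
        (G.neighborSet x ∩ {y | ρ y = ρ x}).ncard + a (ρ x) x ≤
        (G.neighborSet x ∩ {y | ρ y ≠ ρ x}).ncard + a (ρ x + 1) x) := by
  obtain ⟨e, he⟩ := exists_injective_nat X
  let T : ℕ → X → Prop := fun n x =>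
    ∃ (i : ℕ) (c : Fin 2), n = 2 * Nat.pair (e x) i + c.val ∧ i < a c x
  have hT : ∀ n, {x | T n x}.Subsingleton := by
    rintro n x ⟨i, c, hn, -⟩ y ⟨j, d, hn', -⟩
    have : Nat.pair (e x) i = Nat.pair (e y) j := by omega
    exact he (Nat.pair_eq_pair.mp this).1
  have hTim : ∀ x (c : Fin 2), {n | T n x ∧ n % 2 = c.val} =
      (fun i => 2 * Nat.pair (e x) i + c.val) '' Set.Iio (a c x) := by
    intro x c
    ext n
    constructor
    · rintro ⟨⟨i, d, hn, hi⟩, hc⟩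
      obtain rfl : d = c := by omega
      exact ⟨i, hi, hn.symm⟩
    · rintro ⟨i, hi, rfl⟩
      exact ⟨⟨i, c, rfl, hi⟩, by simp only; omega⟩
  have hTfin' : ∀ x (c : Fin 2), {n | T n x ∧ n % 2 = c.val}.Finite := by
    intro x c; rw [hTim]; exact (Set.finite_Iio _).image _
  have hTcard : ∀ x (c : Fin 2), {n | T n x ∧ n % 2 = c.val}.ncard = a c x := by
    intro x c
    rw [hTim, Set.ncard_image_of_injective]
    · simp
    · intro i j hij
      have : Nat.pair (e x) i = Nat.pair (e x) j := by simp only at hij; omega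
      exact (Nat.pair_eq_pair.mp this).2
  have hTfin : ∀ x, {n | T n x}.Finite := by
    intro x
    refine ((hTfin' x 0).union (hTfin' x 1)).subset ?_
    intro n hn
    rcases Nat.mod_two_eq_zero_or_one n with h | h
    · exact Or.inl ⟨hn, h⟩
    · exact Or.inr ⟨hn, h⟩
  let H := GWGraph G T
  have hbinf : ∀ x, (H.neighborSet (.base x)).Finite ↔ (G.neighborSet x).Finite := by
    intro x
    rw [nb_base, Set.finite_union]
    constructor
    · intro h; exact Set.Finite.of_finite_image h.1 GW.base_inj.injOn
    · intro h; exact ⟨h.image _, (hTfin x).image _⟩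
  have key : ∃ π : GW X → Fin 2, UnfriendlyPartition H π := by
    refine hyp (GW X) H (GW.countable X) ⟨(GW.base '' V2)ᶜ, GW.base '' V2, by
      simp, disjoint_compl_left, ?_, ?_, ?_, ?_⟩
    · rintro (x | ⟨n, i⟩ | n) hx
      · have hx1 : x ∈ V1 := by
          have : x ∈ V1 ∪ V2 := by rw [hu]; trivial
          rcases this with h | h
          · exact h
          · exact absurd ⟨x, h, rfl⟩ hx
        refine (((h1 x hx1).image GW.base).union ((hTfin x).image GW.port)).subset ?_
        rw [nb_base]
        rintro w ⟨⟨y, hy, rfl⟩ | hw, hw2⟩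
        · left
          refine ⟨y, ⟨hy, ?_⟩, rfl⟩
          have : y ∈ V1 ∪ V2 := by rw [hu]; trivial
          rcases this with h | h
          · exact h
          · exact absurd ⟨y, h, rfl⟩ hw2
        · exact Or.inr hw
      · exact (fin_blk G T n i).subset Set.inter_subset_left
      · exact (fin_port G T hT n).subset Set.inter_subset_left
    · rintro _ ⟨x, hx, rfl⟩
      refine ((h2 x hx).image GW.base_inj.injOn).mono ?_
      rintro _ ⟨y, ⟨hy, hy1⟩, rfl⟩
      refine ⟨by rw [nb_base]; exact Or.inl ⟨y, hy, rfl⟩, ?_⟩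
      rintro ⟨z, hz, hzy⟩
      obtain rfl := GW.base_inj hzy
      exact Set.disjoint_left.mp hd hy1 hz
    · rintro v w hvw ⟨⟨hv1, hv2⟩, ⟨hw1, hw2⟩⟩
      rcases v with x | ⟨n, i⟩ | n
      · rcases w with y | ⟨n, i⟩ | n
        · have mem1 : ∀ x, GW.base x ∈ (GW.base '' V2)ᶜ → x ∈ V1 := by
            intro x hx
            have : x ∈ V1 ∪ V2 := by rw [hu]; trivial
            rcases this with h | h
            · exact h
            · exact absurd ⟨x, h, rfl⟩ hx
          exact h11 x y hvw (mem1 x hv1) (fun h => hv2 ((hbinf x).mpr h)) (mem1 y hw1)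
            (fun h => hw2 ((hbinf y).mpr h))
        · exact hw2 (fin_blk G T n i)
        · exact hw2 (fin_port G T hT n)
      · exact hv2 (fin_blk G T n i)
      · exact hv2 (fin_port G T hT n)
    · rintro _ _ hvw ⟨⟨x, hx, rfl⟩, ⟨y, hy, rfl⟩⟩
      exact h22 x y hvw hx hy
  obtain ⟨π, hπ⟩ := key
  let ρ : X → Fin 2 := fun x => π (.base x) + π (.port 0)
  have hpc := port_col hT hπ
  have hρ : ∀ x y, ρ x = ρ y ↔ π (.base x) = π (.base y) := by
    intro x y; simp only [ρ]; exact add_left_inj _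
  have hsplit : ∀ x (P : GW X → Prop), H.neighborSet (.base x) ∩ {y | P y} =
      GW.base '' (G.neighborSet x ∩ {y | P (.base y)}) ∪
      GW.port '' {n | T n x ∧ P (.port n)} := by
    intro x P
    rw [nb_base]
    ext w
    cases w <;> simp
  refine ⟨ρ, fun x => ⟨fun hx => ?_, fun hx => ?_⟩⟩
  · have := unf_inf hπ (.base x) (fun hf => hx ((hbinf x).mp hf))
    rw [hsplit x (fun y => π y ≠ π (.base x)), Set.infinite_union] at this
    rcases this with h | h
    · refine (h.of_image _).mono ?_
      rintro y ⟨hy, hy'⟩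
      exact ⟨hy, fun hc => hy' ((hρ _ _).mp hc)⟩
    · exact absurd (((hTfin x).subset fun n hn => hn.1).image _) h
  · have := unf_fin hπ (.base x) ((hbinf x).mpr hx)
    rw [hsplit x (fun y => π y ≠ π (.base x)), hsplit x (fun y => π y = π (.base x))] at this
    have dj : ∀ (A : Set X) (B : Set ℕ), Disjoint (GW.base '' A) (GW.port '' B : Set (GW X)) := by
      intro A B
      rw [Set.disjoint_left]; rintro _ ⟨i, _, rfl⟩ ⟨j, _, h⟩; cases h
    rw [Set.ncard_union_eq (dj _ _) ((hx.subset Set.inter_subset_left).image _)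
        (((hTfin x).subset fun n hn => hn.1).image _),
      Set.ncard_union_eq (dj _ _) ((hx.subset Set.inter_subset_left).image _)
        (((hTfin x).subset fun n hn => hn.1).image _),
      Set.ncard_image_of_injective _ GW.base_inj, Set.ncard_image_of_injective _ GW.base_inj,
      Set.ncard_image_of_injective _ GW.port_inj, Set.ncard_image_of_injective _ GW.port_inj]
      at this
    have e1 : {n | T n x ∧ π (.port n) = π (.base x)} = {n | T n x ∧ n % 2 = (ρ x).val} := by
      ext n
      have := hpc n
      have h3 : (ρ x).val = ((π (.base x)).val + (π (.port 0)).val) % 2 := Fin.val_add _ _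
      simp only [Set.mem_ofPred_eq]
      refine and_congr_right fun _ => ?_
      omega
    have e2 : {n | T n x ∧ π (.port n) ≠ π (.base x)} =
        {n | T n x ∧ n % 2 = (ρ x + 1).val} := by
      ext n
      have := hpc n
      have h3 : (ρ x).val = ((π (.base x)).val + (π (.port 0)).val) % 2 := Fin.val_add _ _
      have h4 : (ρ x + 1).val = ((ρ x).val + 1) % 2 := Fin.val_add _ _
      simp only [Set.mem_ofPred_eq]
      refine and_congr_right fun _ => ?_
      omega
    rw [e1, e2, hTcard, hTcard] at this
    simp only [ne_eq, hρ]
    exact this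

theorem wild {V : Type u} (G : SimpleGraph V) (S : Set V) (hS : S.Countable)
    (h : ∀ x ∈ S, (G.neighborSet x ∩ S).Infinite) :
    ∃ A : Set V, ∀ x ∈ S, (G.neighborSet x ∩ S ∩ A).Infinite ∧
      (G.neighborSet x ∩ S ∩ Aᶜ).Infinite := by
  classical
  have : Countable S := hS.to_subtype
  obtain ⟨k, hk⟩ := exists_injective_nat (S × Bool × ℕ)
  have ht : ∀ i : S × Bool × ℕ, ∃ t : Finset V, (t : Set V) ⊆ G.neighborSet i.1.1 ∩ S ∧
      t.card = k i + 1 := fun i => (h i.1.1 i.1.2).exists_subset_card_eq _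
  choose t ht1 ht2 using ht
  obtain ⟨f, hf, hft⟩ := (Finset.all_card_le_biUnion_card_iff_exists_injective t).mp (by
    intro s
    rcases s.eq_empty_or_nonempty with rfl | hs
    · simp
    obtain ⟨i, hi, hmax⟩ := s.exists_max_image k hs
    calc s.card = (s.image k).card := (Finset.card_image_of_injective _ hk).symm
      _ ≤ (Finset.range (k i + 1)).card := Finset.card_le_card (by
          intro n hn
          obtain ⟨j, hj, rfl⟩ := Finset.mem_image.mp hn
          have := hmax j hj
          simp; omega)
      _ = (t i).card := by rw [ht2]; simp
      _ ≤ _ := Finset.card_le_card (Finset.subset_biUnion_of_mem t hi))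
  refine ⟨{v | ∃ x j, v = f (x, true, j)}, fun x hx => ⟨?_, ?_⟩⟩
  · refine Set.infinite_of_injective_forall_mem (f := fun j : ℕ => f (⟨x, hx⟩, true, j)) ?_ ?_
    · intro a b hab
      have := hf hab
      simpa using this
    · intro j
      exact ⟨ht1 _ (hft (⟨x, hx⟩, true, j)), ⟨_, _, rfl⟩⟩
  · refine Set.infinite_of_injective_forall_mem (f := fun j : ℕ => f (⟨x, hx⟩, false, j)) ?_ ?_
    · intro a b hab
      have := hf hab
      simpa using this
    · intro j
      refine ⟨ht1 _ (hft (⟨x, hx⟩, false, j)), ?_⟩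
      rintro ⟨y, i, hy⟩
      have := hf hy
      simp at this

theorem v12 {X : Type u} (G : SimpleGraph X)
    (h : ∀ S : Set X, S.Nonempty → ∃ x ∈ S, (G.neighborSet x ∩ S).Finite) :
    ∃ V1 V2 : Set X, V1 ∪ V2 = Set.univ ∧ Disjoint V1 V2 ∧
        (∀ x ∈ V1, (G.neighborSet x ∩ V1).Finite) ∧
        (∀ x ∈ V2, (G.neighborSet x ∩ V1).Infinite) := by
  let P : Set (Set X × Set X) := {p | Disjoint p.1 p.2 ∧
    (∀ x ∈ p.1 ∪ p.2, (G.neighborSet x ∩ (p.1 ∪ p.2)ᶜ).Finite) ∧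
    (∀ x ∈ p.1, (G.neighborSet x ∩ p.1).Finite) ∧
    (∀ x ∈ p.2, (G.neighborSet x ∩ p.1).Infinite)}
  obtain ⟨⟨A, B⟩, hm⟩ := zorn_le₀ P (by
    intro c hcP hc
    have hdj : ∀ p ∈ c, ∀ q ∈ c, ∀ x ∈ p.1, x ∈ q.2 → False := by
      intro p hp q hq x hx hx'
      rcases hc.total hp hq with hle | hle
      · exact Set.disjoint_left.mp (hcP hq).1 (hle.1 hx) hx'
      · exact Set.disjoint_left.mp (hcP hp).1 hx (hle.2 hx')
    refine ⟨(⋃ p ∈ c, p.1, ⋃ p ∈ c, p.2), ⟨?_, ?_, ?_, ?_⟩, ?_⟩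
    · rw [Set.disjoint_left]
      intro x hx hx'
      simp only [Set.mem_iUnion] at hx hx'
      obtain ⟨p, hp, hx⟩ := hx
      obtain ⟨q, hq, hx'⟩ := hx'
      exact hdj p hp q hq x hx hx'
    · intro x hx
      have : ∃ p ∈ c, x ∈ p.1 ∪ p.2 := by
        rcases hx with hx | hx
        · simp only [Set.mem_iUnion] at hx
          obtain ⟨p, hp, hx⟩ := hx
          exact ⟨p, hp, Or.inl hx⟩
        · simp only [Set.mem_iUnion] at hx
          obtain ⟨p, hp, hx⟩ := hx
          exact ⟨p, hp, Or.inr hx⟩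
      obtain ⟨p, hp, hx⟩ := this
      refine ((hcP hp).2.1 x hx).subset ?_
      refine Set.inter_subset_inter_right _ (Set.compl_subset_compl.mpr ?_)
      exact Set.union_subset_union (Set.subset_biUnion_of_mem (u := fun p : Set X × Set X => p.1) hp)
        (Set.subset_biUnion_of_mem (u := fun p : Set X × Set X => p.2) hp)
    · intro x hx
      simp only [Set.mem_iUnion] at hx
      obtain ⟨p, hp, hx⟩ := hx
      refine (((hcP hp).2.1 x (Or.inl hx)).union ((hcP hp).2.2.1 x hx)).subset ?_
      rintro y ⟨hy, hy'⟩
      simp only [Set.mem_iUnion] at hy'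
      obtain ⟨q, hq, hy'⟩ := hy'
      by_cases h1 : y ∈ p.1
      · exact Or.inr ⟨hy, h1⟩
      · refine Or.inl ⟨hy, ?_⟩
        rintro (h | h)
        · exact h1 h
        · exact hdj q hq p hp y hy' h
    · intro x hx
      simp only [Set.mem_iUnion] at hx
      obtain ⟨p, hp, hx⟩ := hx
      refine ((hcP hp).2.2.2 x hx).mono (Set.inter_subset_inter_right _ ?_)
      exact Set.subset_biUnion_of_mem (u := fun p : Set X × Set X => p.1) hp
    · intro p hp
      exact ⟨Set.subset_biUnion_of_mem (u := fun p : Set X × Set X => p.1) hp,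
        Set.subset_biUnion_of_mem (u := fun p : Set X × Set X => p.2) hp⟩)
  obtain ⟨⟨hdj, hout, hA, hB⟩, hmax⟩ := hm
  simp only at hdj hout hA hB
  refine ⟨A, B, ?_, hdj, hA, hB⟩
  by_contra hne
  obtain ⟨x, hxR, hxf⟩ := h (A ∪ B)ᶜ (Set.nonempty_compl.mpr hne)
  have hxA : x ∉ A := fun h => hxR (Or.inl h)
  have hxB : x ∉ B := fun h => hxR (Or.inr h)
  by_cases hx : (G.neighborSet x ∩ A).Finite
  · have : ((insert x A, B) : Set X × Set X) ∈ P := by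
      refine ⟨?_, ?_, ?_, ?_⟩
      · exact Set.disjoint_insert_left.mpr ⟨hxB, hdj⟩
      · intro y hy
        have hsub : (G.neighborSet y ∩ (insert x A ∪ B)ᶜ) ⊆ G.neighborSet y ∩ (A ∪ B)ᶜ :=
          Set.inter_subset_inter_right _ (Set.compl_subset_compl.mpr
            (Set.union_subset_union_left _ (Set.subset_insert _ _)))
        rcases hy with (rfl | hy) | hy
        · exact hxf.subset hsub
        · exact (hout y (Or.inl hy)).subset hsub
        · exact (hout y (Or.inr hy)).subset hsub
      · intro y hy
        have hsub : (G.neighborSet y ∩ insert x A) ⊆ (G.neighborSet y ∩ A) ∪ {x} := by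
          rintro z ⟨hz, rfl | hz'⟩
          · exact Or.inr rfl
          · exact Or.inl ⟨hz, hz'⟩
        rcases hy with rfl | hy
        · exact (hx.union (Set.finite_singleton _)).subset hsub
        · exact ((hA y hy).union (Set.finite_singleton _)).subset hsub
      · intro y hy
        exact (hB y hy).mono (Set.inter_subset_inter_right _ (Set.subset_insert _ _))
    have hle := hmax this ⟨Set.subset_insert _ _, le_rfl⟩
    exact hxA (hle.1 (Set.mem_insert _ _))
  · have : ((A, insert x B) : Set X × Set X) ∈ P := by
      refine ⟨?_, ?_, hA, ?_⟩
      · exact Set.disjoint_insert_right.mpr ⟨hxA, hdj⟩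
      · intro y hy
        have hsub : (G.neighborSet y ∩ (A ∪ insert x B)ᶜ) ⊆ G.neighborSet y ∩ (A ∪ B)ᶜ :=
          Set.inter_subset_inter_right _ (Set.compl_subset_compl.mpr
            (Set.union_subset_union_right _ (Set.subset_insert _ _)))
        rcases hy with hy | (rfl | hy)
        · exact (hout y (Or.inl hy)).subset hsub
        · exact hxf.subset hsub
        · exact (hout y (Or.inr hy)).subset hsub
      · rintro y (rfl | hy)
        · exact hx
        · exact hB y hy
    have hle := hmax this ⟨le_rfl, Set.subset_insert _ _⟩
    exact hxB (hle.2 (Set.mem_insert _ _))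

theorem closureCountable {V : Type u} (f : V → Set V) (R : Set V) (hf : ∀ x, (f x).Countable)
    (hfR : ∀ x, f x ⊆ R) (x0 : V) (hx0 : x0 ∈ R) :
    ∃ C : Set V, C.Countable ∧ x0 ∈ C ∧ C ⊆ R ∧ ∀ x ∈ C, f x ⊆ C := by
  let g : ℕ → Set V := fun n => Nat.rec {x0} (fun _ s => ⋃ x ∈ s, f x) n
  have gs : ∀ n, g (n + 1) = ⋃ x ∈ g n, f x := fun n => rfl
  refine ⟨⋃ n, g n, ?_, ?_, ?_, ?_⟩
  · refine Set.countable_iUnion fun n => ?_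
    induction n with
    | zero => exact Set.countable_singleton _
    | succ n ih => rw [gs]; exact ih.biUnion fun x _ => hf x
  · exact Set.mem_iUnion.mpr ⟨0, rfl⟩
  · refine Set.iUnion_subset fun n => ?_
    cases n with
    | zero =>
      intro x hx
      have hxx : x = x0 := hx
      rw [hxx]; exact hx0
    | succ n => rw [gs]; exact Set.iUnion₂_subset fun x _ => hfR x
  · intro x hx y hy
    obtain ⟨n, hn⟩ := Set.mem_iUnion.mp hx
    exact Set.mem_iUnion.mpr ⟨n + 1, by rw [gs]; exact Set.mem_biUnion hn hy⟩

/-- `x` is satisfied if its opposite neighbours contain those in `S`. -/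
def SatBy {V : Type u} (G : SimpleGraph V) (x : V) (S : Set V) : Prop :=
  (G.neighborSet x ∩ S).Infinite ∨
    (G.neighborSet x).Finite ∧ (G.neighborSet x).ncard ≤ 2 * (G.neighborSet x ∩ S).ncard

theorem SatBy.mono {V : Type u} {G : SimpleGraph V} {x : V} {S S' : Set V} (h : SatBy G x S)
    (hs : S ⊆ S') : SatBy G x S' := by
  have hss := Set.inter_subset_inter_right (G.neighborSet x) hs
  rcases h with h | ⟨h, h'⟩
  · exact Or.inl (h.mono hss)
  · have := Set.ncard_le_ncard hss (h.subset Set.inter_subset_left)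
    exact Or.inr ⟨h, by omega⟩

theorem exists_max_partial {V : Type u} (G : SimpleGraph V) :
    ∃ D : Fin 2 → Set V, (∀ c, Disjoint (D c) (D (c + 1))) ∧
      (∀ c, ∀ x ∈ D c, SatBy G x (D (c + 1))) ∧
      ∀ (C : Set V) (ρ : V → Fin 2), (∀ x ∈ C, ∀ c, x ∉ D c) →
        (∀ x ∈ C, SatBy G x ((C ∩ {y | ρ y ≠ ρ x}) ∪ D (ρ x + 1))) → ¬ C.Nonempty := by
  let P : Set (Fin 2 → Set V) := {D | (∀ c, Disjoint (D c) (D (c + 1))) ∧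
      (∀ c, ∀ x ∈ D c, SatBy G x (D (c + 1)))}
  obtain ⟨D, hm⟩ := zorn_le₀ P (by
    intro ch hcP hc
    refine ⟨fun c => ⋃ p ∈ ch, p c, ⟨?_, ?_⟩, ?_⟩
    · intro c
      rw [Set.disjoint_left]
      intro x hx hx'
      simp only [Set.mem_iUnion] at hx hx'
      obtain ⟨p, hp, hx⟩ := hx
      obtain ⟨q, hq, hx'⟩ := hx'
      rcases hc.total hp hq with hle | hle
      · exact Set.disjoint_left.mp ((hcP hq).1 c) (hle c hx) hx'
      · exact Set.disjoint_left.mp ((hcP hp).1 c) hx (hle _ hx')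
    · intro c x hx
      simp only [Set.mem_iUnion] at hx
      obtain ⟨p, hp, hx⟩ := hx
      exact ((hcP hp).2 c x hx).mono
        (Set.subset_biUnion_of_mem (u := fun p : Fin 2 → Set V => p (c + 1)) hp)
    · intro p hp c
      exact Set.subset_biUnion_of_mem (u := fun p : Fin 2 → Set V => p c) hp)
  obtain ⟨⟨hdj, hsat⟩, hmax⟩ := hm
  refine ⟨D, hdj, hsat, ?_⟩
  rintro C ρ hC hCs ⟨x, hx⟩
  have hP : (fun c => D c ∪ (C ∩ {y | ρ y = c})) ∈ P := by
    refine ⟨?_, ?_⟩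
    · intro c
      rw [Set.disjoint_left]
      rintro y (hy | ⟨hy, hy'⟩) (hz | ⟨hz, hz'⟩)
      · exact Set.disjoint_left.mp (hdj c) hy hz
      · exact hC y hz _ hy
      · exact hC y hy _ hz
      · simp only [Set.mem_ofPred_eq] at hy' hz'
        omega
    · rintro c y (hy | ⟨hy, hy'⟩)
      · exact (hsat c y hy).mono Set.subset_union_left
      · refine (hCs y hy).mono ?_
        simp only [Set.mem_ofPred_eq] at hy'
        subst hy'
        rintro z (⟨hz, hz'⟩ | hz)
        · refine Or.inr ⟨hz, ?_⟩
          simp only [Set.mem_ofPred_eq] at hz' ⊢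
          omega
        · exact Or.inl hz
  have := hmax hP (fun c => Set.subset_union_left) (ρ x) (Or.inr ⟨hx, rfl⟩)
  exact hC x hx _ this

theorem stmt12
    (hyp : ∀ (V : Type u) (G : SimpleGraph V), Countable V →
      (∃ V1 V2 : Set V, V1 ∪ V2 = Set.univ ∧ Disjoint V1 V2 ∧
        (∀ x ∈ V1, (G.neighborSet x ∩ V1).Finite) ∧
        (∀ x ∈ V2, (G.neighborSet x ∩ V1).Infinite) ∧
        (∀ x y : V, G.Adj x y →
          ¬(x ∈ V1 \ {z : V | (G.neighborSet z).Finite} ∧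
            y ∈ V1 \ {z : V | (G.neighborSet z).Finite})) ∧
        (∀ x y : V, G.Adj x y → ¬(x ∈ V2 ∧ y ∈ V2))) →
      ∃ π : V → Fin 2, UnfriendlyPartition G π) :
    ∀ (V : Type u) (G : SimpleGraph V), ∃ π : V → Fin 2, OmegaUnfriendlyPartition G π := by
  classical
  intro V G
  obtain ⟨D, hdj, hsat, hmax⟩ := exists_max_partial G
  by_cases hall : ∀ x, ∃ c, x ∈ D c
  · choose π hπ using hall
    have hmem : ∀ y c, y ∈ D c → π y = c := by
      intro y c hy
      by_contra hne
      have h1 : c = π y + 1 := by omega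
      rw [h1] at hy
      exact Set.disjoint_left.mp (hdj (π y)) (hπ y) hy
    have hset : ∀ x, G.neighborSet x ∩ D (π x + 1) = {y : V | G.Adj x y ∧ π y ≠ π x} := by
      intro x
      ext y
      constructor
      · rintro ⟨hy, hy'⟩
        refine ⟨hy, ?_⟩
        have := hmem y _ hy'
        omega
      · rintro ⟨hy, hy'⟩
        refine ⟨hy, ?_⟩
        have : π y = π x + 1 := by omega
        rw [← this]; exact hπ y
    refine ⟨π, fun x => ?_⟩
    have hx := hsat (π x) x (hπ x)
    rw [SatBy, hset] at hx
    rcases hx with h | ⟨hf, h⟩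
    · exact Or.inl h
    · right
      have hs := fin2_split (G.neighborSet x) hf π (π x)
      have f1 : Finite {y : V // G.Adj x y ∧ π y = π x} :=
        (hf.subset (Set.inter_subset_left (t := {y | π y = π x}))).to_subtype
      have f2 : Finite {y : V // G.Adj x y ∧ π y ≠ π x} :=
        (hf.subset (Set.inter_subset_left (t := {y | π y ≠ π x}))).to_subtype
      rw [← Cardinal.toNat_le_iff_le_of_lt_aleph0 (Cardinal.lt_aleph0_of_finite _)
        (Cardinal.lt_aleph0_of_finite _)]
      have h' : (G.neighborSet x ∩ {y | π y = π x}).ncard ≤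
          (G.neighborSet x ∩ {y | π y ≠ π x}).ncard := by
        have e : (G.neighborSet x ∩ {y | π y ≠ π x}) = {y : V | G.Adj x y ∧ π y ≠ π x} := rfl
        rw [← e] at h
        omega
      exact h'
  exfalso
  push Not at hall
  obtain ⟨x0, hx0⟩ := hall
  let R : Set V := {x | ∀ c, x ∉ D c}
  -- infinite degree vertices of `R` have finitely many neighbours in each `D c`
  have hDfin : ∀ x ∈ R, ∀ c, (G.neighborSet x ∩ D c).Finite := by
    intro x hx c
    by_contra hinf
    refine hmax {x} (fun _ => c + 1) ?_ ?_ (Set.singleton_nonempty x)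
    · rintro y rfl; exact hx
    · rintro y rfl
      left
      refine Set.Infinite.mono ?_ hinf
      have : c + 1 + 1 = c := by omega
      rw [this]
      exact Set.inter_subset_inter_right _ Set.subset_union_right
  have hcov : ∀ x, G.neighborSet x ⊆
      (G.neighborSet x ∩ R) ∪ (G.neighborSet x ∩ D 0 ∪ G.neighborSet x ∩ D 1) := by
    intro x y hy
    by_cases h0 : y ∈ D 0
    · exact Or.inr (Or.inl ⟨hy, h0⟩)
    by_cases h1 : y ∈ D 1
    · exact Or.inr (Or.inr ⟨hy, h1⟩)
    refine Or.inl ⟨hy, fun c => ?_⟩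
    fin_cases c
    · exact h0
    · exact h1
  have hRinf : ∀ x ∈ R, (G.neighborSet x).Infinite → (G.neighborSet x ∩ R).Infinite := by
    intro x hx hinf hfin
    exact hinf ((hfin.union ((hDfin x hx 0).union (hDfin x hx 1))).subset (hcov x))
  -- a countable closed set
  have hf : ∀ x, ∃ t : Set V, t ⊆ R ∧ t ⊆ G.neighborSet x ∧ t.Countable ∧
      (x ∈ R → (G.neighborSet x).Infinite → t.Infinite) ∧
      ((G.neighborSet x).Finite → G.neighborSet x ∩ R ⊆ t) := by
    intro x
    by_cases hfin : (G.neighborSet x).Finite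
    · exact ⟨G.neighborSet x ∩ R, Set.inter_subset_right, Set.inter_subset_left,
        (hfin.subset Set.inter_subset_left).countable, fun _ h => absurd hfin h,
        fun _ => subset_rfl⟩
    · by_cases hx : x ∈ R
      · obtain ⟨t, ht, htc, hti⟩ := (hRinf x hx hfin).exists_subset_countable_infinite
        exact ⟨t, ht.trans Set.inter_subset_right, ht.trans Set.inter_subset_left, htc,
          fun _ _ => hti, fun h => absurd h hfin⟩
      · exact ⟨∅, Set.empty_subset _, Set.empty_subset _, Set.countable_empty,
          fun h => absurd h hx, fun h => absurd h hfin⟩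
  choose f hfR hfN hfc hfi hff using hf
  obtain ⟨C, hCc, hx0C, hCR, hCf⟩ := closureCountable f R hfc hfR x0 hx0
  have hCctb : Countable C := hCc.to_subtype
  let GC : SimpleGraph C := G.induce C
  have hGCinf : ∀ x : C, (G.neighborSet x.1).Infinite → (GC.neighborSet x).Infinite := by
    intro x hx hfin
    refine hfi x.1 (hCR x.2) hx ((hfin.image Subtype.val).subset ?_)
    intro y hy
    exact ⟨⟨y, hCf x.1 x.2 hy⟩, hfN x.1 hy, rfl⟩
  have hGCfin : ∀ x : C, (G.neighborSet x.1).Finite → (GC.neighborSet x).Finite := by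
    intro x hx
    exact hx.preimage Subtype.val_injective.injOn
  obtain ⟨V1, V2, hu, hd, h1, h2⟩ := v12 GC (by
    intro S hS
    by_contra! hcon
    have hS' : ∀ x ∈ Subtype.val '' S, (G.neighborSet x ∩ Subtype.val '' S).Infinite := by
      rintro _ ⟨x, hx, rfl⟩
      refine ((hcon x hx).image Subtype.val_injective.injOn).mono ?_
      rintro _ ⟨y, ⟨hy, hyS⟩, rfl⟩
      exact ⟨hy, ⟨y, hyS, rfl⟩⟩
    obtain ⟨A, hA⟩ := wild G (Subtype.val '' S) (S.to_countable.image _) hS'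
    refine hmax (Subtype.val '' S) (fun v => if v ∈ A then 0 else 1) ?_ ?_ (hS.image _)
    · rintro _ ⟨x, hx, rfl⟩; exact hCR x.2
    · intro x hx
      left
      by_cases hxA : x ∈ A
      · refine (hA x hx).2.mono ?_
        rintro y ⟨⟨hy, hyS⟩, hyA⟩
        refine ⟨hy, Or.inl ⟨hyS, ?_⟩⟩
        simp only [Set.mem_ofPred_eq, if_pos hxA, if_neg hyA]
        decide
      · refine (hA x hx).1.mono ?_
        rintro y ⟨⟨hy, hyS⟩, hyA⟩
        refine ⟨hy, Or.inl ⟨hyS, ?_⟩⟩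
        simp only [Set.mem_ofPred_eq, if_neg hxA, if_pos hyA]
        decide)
  have hor : ∀ x, x ∈ V1 ∨ x ∈ V2 := fun x => by
    have : x ∈ V1 ∪ V2 := by rw [hu]; trivial
    exact this
  have hnot : ∀ x, x ∈ V1 → x ∈ V2 → False := fun x hx hx2 => Set.disjoint_left.mp hd hx hx2
  -- delete superfluous edges
  let H : SimpleGraph C :=
    { Adj := fun x y => G.Adj x.1 y.1 ∧ ¬ (x ∈ V2 ∧ y ∈ V2) ∧
        ¬ ((x ∈ V1 ∧ (G.neighborSet x.1).Infinite) ∧ (y ∈ V1 ∧ (G.neighborSet y.1).Infinite))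
      symm := ⟨fun x y h => ⟨h.1.symm, fun h' => h.2.1 h'.symm, fun h' => h.2.2 h'.symm⟩⟩
      loopless := ⟨fun x h => G.loopless.irrefl _ h.1⟩ }
  have hHfin : ∀ x : C, (G.neighborSet x.1).Finite → H.neighborSet x = GC.neighborSet x := by
    intro x hx
    ext y
    constructor
    · intro h; exact h.1
    · intro h
      refine ⟨h, fun hh => ?_, fun hh => hh.1.2 hx⟩
      exact h2 x hh.1 ((hGCfin x hx).subset Set.inter_subset_left)
  have hHle : ∀ x : C, H.neighborSet x ⊆ GC.neighborSet x := fun x y h => h.1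
  have hHV2 : ∀ x ∈ V2, (H.neighborSet x ∩ V1).Infinite := by
    intro x hx
    refine (h2 x hx).mono ?_
    rintro y ⟨hy, hy1⟩
    exact ⟨⟨hy, fun hh => hnot y hy1 hh.2, fun hh => hnot x hh.1.1 hx⟩, hy1⟩
  have hHinf : ∀ x : C, (G.neighborSet x.1).Infinite → (H.neighborSet x).Infinite := by
    intro x hx
    rcases hor x with hx1 | hx2
    · intro hfin
      refine hGCinf x hx ((hfin.union (h1 x hx1)).subset ?_)
      intro y hy
      rcases hor y with hy1 | hy2
      · exact Or.inr ⟨hy, hy1⟩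
      · exact Or.inl ⟨hy, fun hh => hnot x hx1 hh.1, fun hh => hnot y hh.2.1 hy2⟩
    · exact (hHV2 x hx2).mono Set.inter_subset_left
  have hHinf' : ∀ x : C, (H.neighborSet x).Infinite → (G.neighborSet x.1).Infinite := by
    intro x hx hfin
    exact hx ((hGCfin x hfin).subset (hHle x))
  obtain ⟨ρ, hρ⟩ := biased hyp C H V1 V2 hu hd
    (fun x hx => (h1 x hx).subset (Set.inter_subset_inter_left _ (hHle x))) hHV2
    (fun x y hxy hx hxi hy hyi => hxy.2.2 ⟨⟨hx, hHinf' x hxi⟩, ⟨hy, hHinf' y hyi⟩⟩)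
    (fun x y hxy hx hy => hxy.2.1 ⟨hx, hy⟩)
    (fun c x => (G.neighborSet x.1 ∩ D c).ncard)
  let σ : V → Fin 2 := fun v => if h : v ∈ C then ρ ⟨v, h⟩ else 0
  have hσ : ∀ x : C, σ x.1 = ρ x := fun x => by simp [σ]
  refine hmax C σ (fun x hx => hCR hx) ?_ ⟨x0, hx0C⟩
  intro v hv
  obtain ⟨x, rfl⟩ : ∃ x : C, x.1 = v := ⟨⟨v, hv⟩, rfl⟩
  rw [hσ]
  by_cases hfin : (G.neighborSet x.1).Finite
  · right
    refine ⟨hfin, ?_⟩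
    have key := (hρ x).2 (by rw [hHfin x hfin]; exact hGCfin x hfin)
    rw [hHfin x hfin] at key
    have im : ∀ P : Fin 2 → Prop, (GC.neighborSet x ∩ {y | P (ρ y)}).ncard =
        (G.neighborSet x.1 ∩ (C ∩ {y | P (σ y)})).ncard := by
      intro P
      rw [← Set.ncard_image_of_injective _ Subtype.val_injective]
      congr 1
      ext y
      constructor
      · rintro ⟨z, ⟨hz, hz'⟩, rfl⟩
        refine ⟨hz, z.2, ?_⟩
        simp only [Set.mem_ofPred_eq, hσ]
        exact hz'
      · rintro ⟨hy, hyC, hy'⟩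
        refine ⟨⟨y, hyC⟩, ⟨hy, ?_⟩, rfl⟩
        have := hσ ⟨y, hyC⟩
        simp only at this
        simp only [Set.mem_ofPred_eq, this] at hy'
        exact hy'
    rw [im (fun c => c = ρ x), im (fun c => c ≠ ρ x)] at key
    have dj : Disjoint (G.neighborSet x.1 ∩ (C ∩ {y | σ y ≠ ρ x}))
        (G.neighborSet x.1 ∩ D (ρ x + 1)) := by
      rw [Set.disjoint_left]
      rintro y ⟨_, hy, _⟩ ⟨_, hy'⟩
      exact hCR hy _ hy'
    rw [Set.inter_union_distrib_left, Set.ncard_union_eq dj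
      (hfin.subset Set.inter_subset_left) (hfin.subset Set.inter_subset_left)]
    have hsub : G.neighborSet x.1 ⊆
        ((G.neighborSet x.1 ∩ (C ∩ {y | σ y = ρ x})) ∪
          (G.neighborSet x.1 ∩ (C ∩ {y | σ y ≠ ρ x}))) ∪
        ((G.neighborSet x.1 ∩ D (ρ x)) ∪ (G.neighborSet x.1 ∩ D (ρ x + 1))) := by
      intro y hy
      by_cases hyD : ∃ c, y ∈ D c
      · obtain ⟨c, hc⟩ := hyD
        by_cases hcx : c = ρ x
        · subst hcx; exact Or.inr (Or.inl ⟨hy, hc⟩)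
        · have : c = ρ x + 1 := by omega
          subst this; exact Or.inr (Or.inr ⟨hy, hc⟩)
      · push Not at hyD
        have hyC : y ∈ C := hCf x.1 x.2 (hff x.1 hfin ⟨hy, hyD⟩)
        by_cases hs : σ y = ρ x
        · exact Or.inl (Or.inl ⟨hy, hyC, hs⟩)
        · exact Or.inl (Or.inr ⟨hy, hyC, hs⟩)
    have c1 := Set.ncard_le_ncard hsub (hfin.subset (by
      rintro y ((h | h) | (h | h)) <;> exact h.1))
    have c2 := c1.trans (Set.ncard_union_le _ _)
    have c3 := Set.ncard_union_le (G.neighborSet x.1 ∩ (C ∩ {y | σ y = ρ x}))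
      (G.neighborSet x.1 ∩ (C ∩ {y | σ y ≠ ρ x}))
    have c4 := Set.ncard_union_le (G.neighborSet x.1 ∩ D (ρ x)) (G.neighborSet x.1 ∩ D (ρ x + 1))
    omega
  · left
    refine (((hρ x).1 (hHinf x hfin)).image Subtype.val_injective.injOn).mono ?_
    rintro _ ⟨y, ⟨hy, hy'⟩, rfl⟩
    refine ⟨hy.1, Or.inl ⟨y.2, ?_⟩⟩
    simp only [Set.mem_ofPred_eq, hσ]
    exact hy'
end

section
/- If every countable graph having no nonempty induced subgraph in which every vertex has infinite degree admits an unfriendly partition, then every graph with conditions admits an ω-unfriendly partition. -/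
open Cardinal

universe u

/-- `π` is a `μ`-unfriendly partition of the graph with conditions `(G, C)`:
for each vertex `x`, if `π x = 0` then `κ_x + |{neighbours of colour 0}|` is at most
`λ_x + |{neighbours of colour 1}|`, and symmetrically if `π x = 1`, except possibly
when the two compared cardinals are both `≥ μ`. -/
def CondMuUnfriendly {V : Type u} (G : SimpleGraph V) (C : V → Cardinal.{u} × Cardinal.{u})
    (μ : Cardinal.{u}) (π : V → Fin 2) : Prop :=
  ∀ x : V,
    (π x = 0 →
      (C x).1 + #{y : V // G.Adj x y ∧ π y = 0} ≤ (C x).2 + #{y : V // G.Adj x y ∧ π y = 1} ∨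
      (μ ≤ (C x).1 + #{y : V // G.Adj x y ∧ π y = 0} ∧
        μ ≤ (C x).2 + #{y : V // G.Adj x y ∧ π y = 1})) ∧
    (π x = 1 →
      (C x).2 + #{y : V // G.Adj x y ∧ π y = 1} ≤ (C x).1 + #{y : V // G.Adj x y ∧ π y = 0} ∨
      (μ ≤ (C x).1 + #{y : V // G.Adj x y ∧ π y = 0} ∧
        μ ≤ (C x).2 + #{y : V // G.Adj x y ∧ π y = 1}))


theorem unfriendly_bool {V : Type u} (G : SimpleGraph V) (π : V → Fin 2)
    (h : UnfriendlyPartition G π) (r : V) :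
    ∃ q : V → Bool, q r = true ∧ ∀ x, {y | G.Adj x y ∧ q y = q x}.encard ≤
      {y | G.Adj x y ∧ q y = !q x}.encard := by
  refine ⟨fun x => decide (π x = π r), by simp, fun x => ?_⟩
  have h1 := OrderHomClass.mono Cardinal.toENat (h x)
  rw [Set.toENat_cardinalMk_subtype, Set.toENat_cardinalMk_subtype] at h1
  have e1 : {y | G.Adj x y ∧ decide (π y = π r) = decide (π x = π r)} =
      {y | G.Adj x y ∧ π y = π x} := by
    ext y
    simp only [Set.mem_ofPred_eq, and_congr_right_iff]
    intro _
    generalize π y = a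
    generalize π x = b
    generalize π r = c
    revert a b c; decide
  have e2 : {y | G.Adj x y ∧ decide (π y = π r) = !decide (π x = π r)} =
      {y | G.Adj x y ∧ π y ≠ π x} := by
    ext y
    simp only [Set.mem_ofPred_eq, and_congr_right_iff]
    intro _
    generalize π y = a
    generalize π x = b
    generalize π r = c
    revert a b c; decide
  rw [e1, e2]
  exact h1

/-- The vertices of the extended graph that simulates finite conditions. -/
inductive UExt (V : Type u) : Type u
  | o (x : V) : UExt V
  | y : UExt V
  | v (n : ℕ) : UExt V
  | a (n j : ℕ) : UExt V
  | w (n : ℕ) : UExt V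

namespace UExt

/-- hook vertices -/
def hook {V : Type u} (b : Bool) (k : ℕ) : UExt V := if b then v k else w k

/-- The one-directional edge relation of the extended graph. -/
def rel {V : Type u} (G : SimpleGraph V) (e : V → ℕ) (c : V → Bool → ℕ) : UExt V → UExt V → Prop
  | o x, o z => G.Adj x z
  | y, a n j => j < 4 * (n + 1)
  | a n j, v k => j < 4 * (n + 1) ∧ (k = n ∨ k = n + 1)
  | w n, v k => k = n ∨ k = n + 1
  | o x, v k => ∃ i < c x true, k = Nat.pair (e x) i
  | o x, w k => ∃ i < c x false, k = Nat.pair (e x) i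
  | _, _ => False

/-- The extended graph. -/
def gr {V : Type u} (G : SimpleGraph V) (e : V → ℕ) (c : V → Bool → ℕ) : SimpleGraph (UExt V) where
  Adj s t := rel G e c s t ∨ rel G e c t s
  symm := ⟨fun _ _ h => h.symm⟩
  loopless := ⟨fun s h => by cases s <;> simp [rel] at h⟩

variable {V : Type u} (G : SimpleGraph V) (e : V → ℕ) (c : V → Bool → ℕ)

theorem countable_ext [Countable V] : Countable (UExt V) := by
  let f : UExt V → (V ⊕ Unit) ⊕ (ℕ ⊕ (ℕ × ℕ)) ⊕ ℕ := fun s => match s with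
    | o x => .inl (.inl x)
    | y => .inl (.inr ())
    | v n => .inr (.inl (.inl n))
    | a n j => .inr (.inl (.inr (n, j)))
    | w n => .inr (.inr n)
  have hf : Function.Injective f := by
    intro s t h
    cases s <;> cases t <;> simp_all [f]
  exact hf.countable

theorem nbr_a {n j : ℕ} {t : UExt V} :
    (gr G e c).Adj (a n j) t ↔ j < 4 * (n + 1) ∧ (t = y ∨ t = v n ∨ t = v (n + 1)) := by
  cases t <;> simp [gr, rel]

theorem nbr_y {t : UExt V} :
    (gr G e c).Adj y t ↔ ∃ n j, j < 4 * (n + 1) ∧ t = a n j := by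
  cases t <;> simp [gr, rel]

theorem nbr_o {x : V} {t : UExt V} :
    (gr G e c).Adj (o x) t ↔ (∃ z, G.Adj x z ∧ t = o z) ∨
      ∃ b, ∃ i < c x b, t = hook b (Nat.pair (e x) i) := by
  cases t <;> simp [gr, rel, hook, G.adj_comm]

/-- small number of exceptional neighbours of `v n` -/
def exc (n : ℕ) : Set (UExt V) :=
  (fun j => a (n - 1) j) '' {j | j < 4 * n} ∪ ({w n, w (n - 1)} ∪
    o '' {x | e x = (Nat.unpair n).1})

theorem exc_card (he : Function.Injective e) (n : ℕ) :
    (exc e n).encard ≤ ((4 * n + 3 : ℕ) : ℕ∞) := by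
  have h1 : ((fun j => (a (n - 1) j : UExt V)) '' {j | j < 4 * n}).encard ≤ ((4 * n : ℕ) : ℕ∞) := by
    refine (Set.encard_image_le _ _).trans ?_
    rw [Set.Nat.encard_range]
  have h2 : ({w n, w (n - 1)} : Set (UExt V)).encard ≤ 2 := by
    refine (Set.encard_insert_le _ _).trans ?_
    rw [Set.encard_singleton]; norm_num
  have h3 : ((o '' {x | e x = (Nat.unpair n).1}) : Set (UExt V)).encard ≤ 1 := by
    refine (Set.encard_image_le _ _).trans ?_
    rw [Set.encard_le_one_iff]
    intro p q hp hq
    exact he (hp.trans hq.symm)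
  calc _ ≤ _ := Set.encard_union_le _ _
    _ ≤ ((4 * n : ℕ) : ℕ∞) + (2 + 1) :=
      add_le_add h1 ((Set.encard_union_le _ _).trans (add_le_add h2 h3))
    _ = _ := by push_cast; norm_num

theorem nbr_v {n : ℕ} {t : UExt V} (h : (gr G e c).Adj (v n) t) :
    (∃ j < 4 * (n + 1), t = a n j) ∨ t ∈ exc e n := by
  cases t with
  | o x =>
    right; right; right
    simp [gr, rel] at h
    obtain ⟨i, _, h⟩ := h
    exact ⟨x, by simp [h], rfl⟩
  | y => simp [gr, rel] at h
  | v k => simp [gr, rel] at h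
  | a k j =>
    simp [gr, rel] at h
    obtain ⟨hj, rfl | rfl⟩ := h
    · exact Or.inl ⟨j, hj, rfl⟩
    · exact Or.inr (Or.inl ⟨j, by simpa using hj, by simp⟩)
  | w k =>
    simp [gr, rel] at h
    obtain rfl | rfl := h
    · exact Or.inr (Or.inr (Or.inl (by simp)))
    · exact Or.inr (Or.inr (Or.inl (by simp)))

theorem adj_w_v {n k : ℕ} (h : k = n ∨ k = n + 1) : (gr G e c).Adj (w n) (v k) := by
  simp [gr, rel, h]

theorem nbr_w {n : ℕ} {t : UExt V} (h : (gr G e c).Adj (w n) t) :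
    t = v n ∨ t = v (n + 1) ∨ t ∈ o '' {x | e x = (Nat.unpair n).1} := by
  cases t with
  | o x =>
    right; right
    simp [gr, rel] at h
    obtain ⟨i, _, h⟩ := h
    exact ⟨x, by simp [h], rfl⟩
  | y => simp [gr, rel] at h
  | v k => simpa [gr, rel] using h
  | a k j => simp [gr, rel] at h
  | w k => simp [gr, rel] at h

theorem hookset_sub (he : Function.Injective e) (n : ℕ) :
    ((o '' {x | e x = (Nat.unpair n).1}) : Set (UExt V)).encard ≤ 1 := by
  refine (Set.encard_image_le _ _).trans ?_
  rw [Set.encard_le_one_iff]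
  intro p q hp hq
  exact he (hp.trans hq.symm)

theorem gr_class (he : Function.Injective e)
    (hG : ∀ W : Set V, (∀ x ∈ W, (G.neighborSet x ∩ W).Infinite) → W = ∅) :
    ∀ W : Set (UExt V), (∀ x ∈ W, ((gr G e c).neighborSet x ∩ W).Infinite) → W = ∅ := by
  intro W hW
  have hv : ∀ n, v n ∉ W := by
    intro n hn
    refine hW _ hn (Set.Finite.subset (s := (fun j => a n j) '' {j | j < 4 * (n+1)} ∪ exc e n) ?_ ?_)
    · refine Set.Finite.union ((Set.finite_lt_nat _).image _) ?_
      exact Set.finite_of_encard_le_coe (exc_card e he n)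
    · rintro t ⟨ht, -⟩
      rcases nbr_v G e c ht with ⟨j, hj, rfl⟩ | h
      · exact Or.inl ⟨j, hj, rfl⟩
      · exact Or.inr h
  have hw : ∀ n, w n ∉ W := by
    intro n hn
    refine hW _ hn (Set.Finite.subset
      (s := {v n, v (n+1)} ∪ o '' {x | e x = (Nat.unpair n).1}) ?_ ?_)
    · refine Set.Finite.union (by simp) ?_
      exact Set.finite_of_encard_le_coe (k := 1) (by simpa using hookset_sub e he n)
    · rintro t ⟨ht, -⟩
      rcases nbr_w G e c ht with rfl | rfl | h
      · simp
      · simp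
      · exact Or.inr h
  have ha : ∀ n j, a n j ∉ W := by
    intro n j hn
    refine hW _ hn (Set.Finite.subset (s := {y, v n, v (n+1)}) (by simp) ?_)
    rintro t ⟨ht, -⟩
    simpa using ((nbr_a G e c).1 ht).2
  have hy : y ∉ W := by
    intro hn
    refine hW _ hn ?_
    convert Set.finite_empty
    ext t
    simp only [Set.mem_inter_iff, SimpleGraph.mem_neighborSet, nbr_y, Set.mem_empty_iff_false,
      iff_false, not_and]
    rintro ⟨n, j, -, rfl⟩
    exact ha n j
  have ho : o ⁻¹' W = ∅ := by
    apply hG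
    intro x hx
    have := hW _ hx
    refine fun hf => this ((hf.image o).subset ?_)
    rintro t ⟨ht, htW⟩
    rcases (nbr_o G e c).1 ht with ⟨z, hz, rfl⟩ | ⟨b, i, hi, rfl⟩
    · exact ⟨z, ⟨hz, htW⟩, rfl⟩
    · cases b
      · exact absurd htW (hw _)
      · exact absurd htW (hv _)
  ext t
  simp only [Set.mem_empty_iff_false, iff_false]
  cases t with
  | o x => intro h; exact (Set.ext_iff.1 ho x).1 h
  | y => exact hy
  | v n => exact hv n
  | a n j => exact ha n j
  | w n => exact hw n

/-- two same neighbours and at most one opposite one is impossible -/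
theorem two_one {U : Type u} {A B : Set U} (h : A.encard ≤ B.encard) {p p' : U} (hpp : p ≠ p')
    (hp : p ∈ A) (hp' : p' ∈ A) (hB : B.encard ≤ 1) : False := by
  have h2 : ({p, p'} : Set U).encard ≤ A.encard := Set.encard_le_encard (by
    rintro t (rfl | rfl) <;> assumption)
  rw [Set.encard_pair hpp] at h2
  have := (h2.trans h).trans hB
  norm_num at this

theorem col_a1 (q : UExt V → Bool) (hqy : q y = true)
  (H : ∀ x, {t | (gr G e c).Adj x t ∧ q t = q x}.encard ≤
      {t | (gr G e c).Adj x t ∧ q t = !q x}.encard)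
    {n j : ℕ} (hj : j < 4 * (n + 1)) (h : q (a n j) = false) :
    q (v n) = true ∨ q (v (n + 1)) = true := by
  by_contra hcon
  simp only [not_or, Bool.not_eq_true] at hcon
  refine two_one (H (a n j)) (p := v n) (p' := v (n + 1)) (by simp) ?_ ?_ ?_
  · simp [nbr_a, hj, hcon, h]
  · simp [nbr_a, hj, hcon, h]
  · refine (Set.encard_le_encard (t := {y}) ?_).trans (by simp)
    rintro t ⟨ht, hq⟩
    rcases ((nbr_a G e c).1 ht).2 with rfl | rfl | rfl <;> simp_all

theorem col_a2 (q : UExt V → Bool) (hqy : q y = true)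
  (H : ∀ x, {t | (gr G e c).Adj x t ∧ q t = q x}.encard ≤
      {t | (gr G e c).Adj x t ∧ q t = !q x}.encard)
    {n j : ℕ} (hj : j < 4 * (n + 1)) (h : q (v (n + 1)) = true) :
    q (a n j) = false := by
  by_contra hcon
  simp only [Bool.not_eq_false] at hcon
  refine two_one (H (a n j)) (p := y) (p' := v (n + 1)) (by simp) ?_ ?_ ?_
  · simp [nbr_a, hj, hcon, hqy]
  · simp [nbr_a, hj, hcon, h]
  · refine (Set.encard_le_encard (t := {v n}) ?_).trans (by simp)
    rintro t ⟨ht, hq⟩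
    rcases ((nbr_a G e c).1 ht).2 with rfl | rfl | rfl <;> simp_all

theorem col_v1 (q : UExt V → Bool) (hqy : q y = true)
  (H : ∀ x, {t | (gr G e c).Adj x t ∧ q t = q x}.encard ≤
      {t | (gr G e c).Adj x t ∧ q t = !q x}.encard)
    (he : Function.Injective e) {n : ℕ} (h : q (v (n + 1)) = true) : q (v n) = true := by
  by_contra hcon
  simp only [Bool.not_eq_true] at hcon
  have h1 := H (v n)
  have h2 : ((4 * (n + 1) : ℕ) : ℕ∞) ≤ {t | (gr G e c).Adj (v n) t ∧ q t = q (v n)}.encard := by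
    have hinj : Function.Injective (fun j => (a n j : UExt V)) := by
      intro i j hij; simpa using hij
    rw [← Set.Nat.encard_range, ← hinj.encard_image]
    apply Set.encard_le_encard
    rintro t ⟨j, hj, rfl⟩
    refine ⟨?_, ?_⟩
    · rw [SimpleGraph.adj_comm, nbr_a]
      exact ⟨hj, by simp⟩
    · rw [hcon]
      exact col_a2 G e c q hqy H hj h
  have h3 : {t | (gr G e c).Adj (v n) t ∧ q t = !q (v n)}.encard ≤ ((4 * n + 3 : ℕ) : ℕ∞) := by
    refine le_trans (Set.encard_le_encard ?_) (exc_card e he n)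
    rintro t ⟨ht, hq⟩
    rcases nbr_v G e c ht with ⟨j, hj, rfl⟩ | h'
    · rw [col_a2 G e c q hqy H hj h, hcon] at hq
      simp at hq
    · exact h'
  have := (h2.trans h1).trans h3
  rw [Nat.cast_le] at this
  omega

theorem col_v2 (q : UExt V → Bool) (hqy : q y = true)
  (H : ∀ x, {t | (gr G e c).Adj x t ∧ q t = q x}.encard ≤
      {t | (gr G e c).Adj x t ∧ q t = !q x}.encard)
    (N : ℕ) : ∃ n, N ≤ n ∧ q (v n) = true := by
  by_contra hcon
  push Not at hcon
  have hfin : {t | (gr G e c).Adj y t ∧ q t = !q y}.Finite := by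
    refine Set.Finite.subset (s := (fun p : ℕ × ℕ => (a p.1 p.2 : UExt V)) ''
      ({n | n < N} ×ˢ {j | j < 4 * (N + 1)})) ?_ ?_
    · exact ((Set.finite_lt_nat _).prod (Set.finite_lt_nat _)).image _
    · rintro t ⟨ht, hq⟩
      obtain ⟨n, j, hj, rfl⟩ := (nbr_y G e c).1 ht
      rw [hqy] at hq
      have hn : n < N := by
        by_contra hn
        rcases col_a1 G e c q hqy H hj (by simpa using hq) with h | h
        · exact hcon n (by omega) h
        · exact hcon (n + 1) (by omega) h
      refine ⟨(n, j), ⟨hn, ?_⟩, rfl⟩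
      show j < 4 * (N + 1)
      omega
  have hfin2 : {t | (gr G e c).Adj y t ∧ q t = q y}.Finite := hfin.finite_of_encard_le (H y)
  have hinj : Function.Injective (fun n => (a n 0 : UExt V)) := by
    intro i j hij; simpa using hij
  refine Set.infinite_range_of_injective hinj ((hfin.union hfin2).subset ?_)
  rintro t ⟨n, rfl⟩
  have had : (gr G e c).Adj y (a n 0) := by
    rw [nbr_y]; exact ⟨n, 0, by omega, rfl⟩
  by_cases h : q (a n 0) = q y
  · exact Or.inr ⟨had, h⟩
  · refine Or.inl ⟨had, ?_⟩
    show q (a n 0) = !q y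
    revert h
    cases q (a n 0) <;> cases q y <;> simp

theorem col_v (q : UExt V → Bool) (hqy : q y = true)
  (H : ∀ x, {t | (gr G e c).Adj x t ∧ q t = q x}.encard ≤
      {t | (gr G e c).Adj x t ∧ q t = !q x}.encard)
    (he : Function.Injective e) (n : ℕ) : q (v n) = true := by
  have key : ∀ m, q (v m) = true → ∀ k ≤ m, q (v k) = true := by
    intro m
    induction m with
    | zero => intro h k hk; obtain rfl : k = 0 := by omega
              exact h
    | succ m ih =>
      intro h k hk
      rcases Nat.lt_or_ge m k with h' | h'
      · obtain rfl : k = m + 1 := by omega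
        exact h
      · exact ih (col_v1 G e c q hqy H he h) k h'
  obtain ⟨m, hm, hq⟩ := col_v2 G e c q hqy H n
  exact key m hq n hm

theorem col_w (q : UExt V → Bool) (hqy : q y = true)
  (H : ∀ x, {t | (gr G e c).Adj x t ∧ q t = q x}.encard ≤
      {t | (gr G e c).Adj x t ∧ q t = !q x}.encard)
    (he : Function.Injective e) (n : ℕ) : q (w n) = false := by
  by_contra hcon
  simp only [Bool.not_eq_false] at hcon
  have hv := col_v G e c q hqy H he
  refine two_one (H (w n)) (p := v n) (p' := v (n + 1)) (by simp) ?_ ?_ ?_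
  · exact ⟨adj_w_v G e c (by simp), by rw [hv, hcon]⟩
  · exact ⟨adj_w_v G e c (by simp), by rw [hv, hcon]⟩
  · refine le_trans (Set.encard_le_encard ?_) (hookset_sub e he n)
    rintro t ⟨ht, hq⟩
    rcases nbr_w G e c ht with rfl | rfl | h
    · rw [hv, hcon] at hq; simp at hq
    · rw [hv, hcon] at hq; simp at hq
    · exact h

theorem col_hook (q : UExt V → Bool) (hqy : q y = true)
  (H : ∀ x, {t | (gr G e c).Adj x t ∧ q t = q x}.encard ≤
      {t | (gr G e c).Adj x t ∧ q t = !q x}.encard)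
    (he : Function.Injective e) (b : Bool) (n : ℕ) : q (hook b n) = b := by
  cases b
  · exact col_w G e c q hqy H he n
  · exact col_v G e c q hqy H he n

theorem col_count (q : UExt V → Bool) (hqy : q y = true)
  (H : ∀ x, {t | (gr G e c).Adj x t ∧ q t = q x}.encard ≤
      {t | (gr G e c).Adj x t ∧ q t = !q x}.encard)
    (he : Function.Injective e) (x : V) (b : Bool) :
    {t | (gr G e c).Adj (o x) t ∧ q t = b}.encard =
      (c x b : ℕ∞) + {z | G.Adj x z ∧ q (o z) = b}.encard := by
  have hk := col_hook G e c q hqy H he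
  have h1 : {t | (gr G e c).Adj (o x) t ∧ q t = b} =
      (fun i => (hook b (Nat.pair (e x) i) : UExt V)) '' {i | i < c x b} ∪
        o '' {z | G.Adj x z ∧ q (o z) = b} := by
    ext t
    constructor
    · rintro ⟨ht, hq⟩
      rcases (nbr_o G e c).1 ht with ⟨z, hz, rfl⟩ | ⟨b', i, hi, rfl⟩
      · exact Or.inr ⟨z, ⟨hz, hq⟩, rfl⟩
      · rw [hk] at hq
        subst hq
        exact Or.inl ⟨i, hi, rfl⟩
    · rintro (⟨i, hi, rfl⟩ | ⟨z, ⟨hz, hq⟩, rfl⟩)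
      · exact ⟨(nbr_o G e c).2 (Or.inr ⟨b, i, hi, rfl⟩), hk _ _⟩
      · exact ⟨(nbr_o G e c).2 (Or.inl ⟨z, hz, rfl⟩), hq⟩
  have hi1 : Function.Injective (fun i => (hook b (Nat.pair (e x) i) : UExt V)) := by
    intro i j hij
    cases b <;> simpa [hook, Nat.pair_eq_pair] using hij
  have hi2 : Function.Injective (o : V → UExt V) := by
    intro i j hij; simpa using hij
  rw [h1, Set.encard_union_eq, hi1.encard_image, hi2.encard_image, Set.Nat.encard_range]
  rw [Set.disjoint_left]
  rintro t ⟨i, -, rfl⟩ ⟨z, -, hz⟩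
  cases b <;> simp [hook] at hz

end UExt

theorem finite_conditions
    (hyp : ∀ (V : Type u) (G : SimpleGraph V), Countable V →
      (∀ W : Set V, (∀ x ∈ W, (G.neighborSet x ∩ W).Infinite) → W = ∅) →
      ∃ π : V → Fin 2, UnfriendlyPartition G π)
    (V : Type u) (G : SimpleGraph V) (hV : Countable V)
    (hG : ∀ W : Set V, (∀ x ∈ W, (G.neighborSet x ∩ W).Infinite) → W = ∅)
    (c : V → Bool → ℕ) :
    ∃ π : V → Bool, ∀ x, (c x (π x) : ℕ∞) + {z | G.Adj x z ∧ π z = π x}.encard ≤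
      (c x (!π x) : ℕ∞) + {z | G.Adj x z ∧ π z = !π x}.encard := by
  obtain ⟨e, he⟩ := exists_injective_nat V
  obtain ⟨π, hπ⟩ := hyp _ (UExt.gr G e c) UExt.countable_ext (UExt.gr_class G e c he hG)
  obtain ⟨q, hqy, H⟩ := unfriendly_bool _ π hπ UExt.y
  refine ⟨fun x => q (UExt.o x), fun x => ?_⟩
  have := H (UExt.o x)
  rwa [UExt.col_count G e c q hqy H he, UExt.col_count G e c q hqy H he] at this

theorem inj_choice {ι α : Type u} [Countable ι] (S : ι → Set α) (hS : ∀ i, (S i).Infinite) :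
    ∃ f : ι → α, Function.Injective f ∧ ∀ i, f i ∈ S i := by
  classical
  obtain ⟨e, he⟩ := exists_injective_nat ι
  choose t ht hc using fun i => (hS i).exists_subset_card_eq (e i + 1)
  have := (Finset.all_card_le_biUnion_card_iff_exists_injective t).1 (by
    intro s
    rcases s.eq_empty_or_nonempty with rfl | hs
    · simp
    obtain ⟨i, hi, hmax⟩ := s.exists_max_image e hs
    have h1 : s.card ≤ (Finset.range (e i + 1)).card := by
      apply Finset.card_le_card_of_injOn e
      · intro j hj
        have := hmax j hj
        simp; omega
      · exact he.injOn
    rw [Finset.card_range] at h1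
    rw [← hc i] at h1
    exact h1.trans (Finset.card_le_card (Finset.subset_biUnion_of_mem t hi)))
  obtain ⟨f, hf, hft⟩ := this
  exact ⟨f, hf, fun i => ht i (hft i)⟩

theorem two_colour {V : Type u} (G : SimpleGraph V) (W : Set V) (hc : W.Countable)
    (hW : ∀ x ∈ W, (G.neighborSet x ∩ W).Infinite) :
    ∃ f : V → Bool, ∀ x ∈ W, ∀ b, {y | G.Adj x y ∧ y ∈ W ∧ f y = b}.Infinite := by
  classical
  haveI : Countable W := hc.to_subtype
  obtain ⟨g, hg, hgm⟩ := inj_choice (ι := W × Bool × ℕ)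
    (fun i => G.neighborSet i.1.1 ∩ W) (fun i => hW _ i.1.2)
  refine ⟨fun y => if ∃ i : W × Bool × ℕ, g i = y ∧ i.2.1 = true then true else false, ?_⟩
  intro x hx b
  have hinj : Function.Injective (fun n : ℕ => g (⟨x, hx⟩, b, n)) := by
    intro n m h
    have := hg h
    simpa using this
  refine (Set.infinite_range_of_injective hinj).mono ?_
  rintro y ⟨n, rfl⟩
  have := hgm (⟨x, hx⟩, b, n)
  refine ⟨this.1, this.2, ?_⟩
  cases b with
  | true =>
    exact if_pos ⟨_, rfl, rfl⟩
  | false =>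
    refine if_neg ?_
    rintro ⟨i, hi, hi2⟩
    have := hg hi
    rw [this] at hi2
    simp at hi2

theorem countable_closure {V : Type u} (G : SimpleGraph V) (R : Set V) (x0 : V) (hx0 : x0 ∈ R) :
    ∃ K : Set V, K.Countable ∧ K ⊆ R ∧ x0 ∈ K ∧
      ∀ x ∈ K, (∀ y ∈ R, G.Adj x y → y ∈ K) ∨ (G.neighborSet x ∩ K).Infinite := by
  have hN : ∀ x, ∃ T : Set V, T.Countable ∧ T ⊆ G.neighborSet x ∩ R ∧
      (G.neighborSet x ∩ R ⊆ T ∨ T.Infinite) := by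
    intro x
    by_cases h : (G.neighborSet x ∩ R).Finite
    · exact ⟨_, h.countable, subset_rfl, Or.inl subset_rfl⟩
    · let g := Set.Infinite.natEmbedding _ h
      refine ⟨Set.range (fun n => (g n : V)), Set.countable_range _, ?_, Or.inr ?_⟩
      · rintro _ ⟨n, rfl⟩
        exact (g n).2
      · exact Set.infinite_range_of_injective (Subtype.val_injective.comp g.injective)
  choose T hTc hTs hT using hN
  let F : Set V → Set V := fun s => ⋃ x ∈ s, T x
  let L : ℕ → Set V := fun n => F^[n] {x0}
  have hS : ∀ n, L (n + 1) = ⋃ x ∈ L n, T x := fun n => Function.iterate_succ_apply' F n {x0}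
  have hL : ∀ n, (L n).Countable ∧ L n ⊆ R := by
    intro n
    induction n with
    | zero => exact ⟨Set.countable_singleton _, Set.singleton_subset_iff.2 hx0⟩
    | succ n ih =>
      rw [hS]
      refine ⟨ih.1.biUnion fun x _ => hTc x, ?_⟩
      refine Set.iUnion₂_subset fun x _ => (hTs x).trans Set.inter_subset_right
  refine ⟨⋃ n, L n, Set.countable_iUnion fun n => (hL n).1, Set.iUnion_subset fun n => (hL n).2,
    Set.mem_iUnion.2 ⟨0, rfl⟩, ?_⟩
  intro x hx
  obtain ⟨n, hn⟩ := Set.mem_iUnion.1 hx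
  have hsub : T x ⊆ ⋃ n, L n := by
    refine subset_trans ?_ (Set.subset_iUnion L (n + 1))
    rw [hS]
    exact Set.subset_biUnion_of_mem (u := fun x => T x) hn
  rcases hT x with h | h
  · exact Or.inl fun y hy hxy => hsub (h ⟨hxy, hy⟩)
  · exact Or.inr (h.mono fun y hy => ⟨(hTs x hy).1, hsub hy⟩)

/-- number of neighbours of `x` in `S` -/
noncomputable def nb {V : Type u} (G : SimpleGraph V) (x : V) (S : Set V) : ℕ∞ :=
  (G.neighborSet x ∩ S).encard

theorem nb_mono {V : Type u} (G : SimpleGraph V) (x : V) {S T : Set V} (h : S ⊆ T) :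
    nb G x S ≤ nb G x T := Set.encard_le_encard (Set.inter_subset_inter_right _ h)

theorem nb_union {V : Type u} (G : SimpleGraph V) (x : V) {S T : Set V} (h : Disjoint S T) :
    nb G x (S ∪ T) = nb G x S + nb G x T := by
  unfold nb
  rw [Set.inter_union_distrib_left, Set.encard_union_eq]
  exact h.mono Set.inter_subset_right Set.inter_subset_right

/-- `x`, coloured `b`, is definitively satisfied by the partial colouring `A`. -/
def Sat {V : Type u} (G : SimpleGraph V) (C : V → Bool → ℕ∞) (A : Bool → Set V) (b : Bool)
    (x : V) : Prop :=
  C x (!b) + nb G x (A !b) = ⊤ ∨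
    ((∀ y, G.Adj x y → ∃ d, y ∈ A d) ∧ C x b + nb G x (A b) ≤ C x (!b) + nb G x (A !b))

/-- valid partial colourings -/
def Valid {V : Type u} (G : SimpleGraph V) (C : V → Bool → ℕ∞) (A : Bool → Set V) : Prop :=
  (∀ b, Disjoint (A b) (A !b)) ∧ ∀ b, ∀ x ∈ A b, Sat G C A b x

theorem Sat.mono {V : Type u} {G : SimpleGraph V} {C : V → Bool → ℕ∞} {A A' : Bool → Set V}
    {b : Bool} {x : V} (h : Sat G C A b x) (hA : ∀ b, A b ⊆ A' b)
    (hd : ∀ b, Disjoint (A' b) (A' !b)) : Sat G C A' b x := by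
  rcases h with h | ⟨h1, h2⟩
  · left
    rw [eq_top_iff, ← h]
    exact add_le_add le_rfl (nb_mono G x (hA _))
  · right
    refine ⟨fun y hy => (h1 y hy).imp fun d hd => hA d hd, ?_⟩
    have key : ∀ d, nb G x (A' d) = nb G x (A d) := by
      intro d
      refine le_antisymm (Set.encard_le_encard ?_) (nb_mono G x (hA _))
      rintro y ⟨hy, hyd⟩
      obtain ⟨d', hd'⟩ := h1 y hy
      refine ⟨hy, ?_⟩
      by_cases hdd : d' = d
      · rwa [hdd] at hd'
      · exfalso
        have : d' = !d := by revert hdd; cases d <;> cases d' <;> simp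
        subst this
        exact Set.disjoint_left.1 (hd d) hyd (hA _ hd')
    rw [key, key]
    exact h2

/-- extension of a partial colouring -/
def extA {V : Type u} (A : Bool → Set V) (K : Set V) (f : V → Bool) : Bool → Set V :=
  fun b => A b ∪ {x | x ∈ K ∧ f x = b}

theorem max_contra {V : Type u} {G : SimpleGraph V} {C : V → Bool → ℕ∞} {A : Bool → Set V}
    (hm : Maximal (Valid G C) A) (K : Set V) (f : V → Bool)
    (hd : ∀ b, Disjoint (A b) K) (hs : ∀ x ∈ K, Sat G C (extA A K f) (f x) x) : K = ∅ := by
  have hsub : ∀ b, A b ⊆ extA A K f b := fun b => Set.subset_union_left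
  have hd' : ∀ b, Disjoint (extA A K f b) (extA A K f !b) := by
    intro b
    rw [Set.disjoint_left]
    rintro x (h | ⟨h, h1⟩) (h' | ⟨h', h2⟩)
    · exact Set.disjoint_left.1 (hm.1.1 b) h h'
    · exact Set.disjoint_left.1 (hd b) h h'
    · exact Set.disjoint_left.1 (hd _) h' h
    · rw [h1] at h2; cases b <;> simp at h2
  have hv : Valid G C (extA A K f) := by
    refine ⟨hd', ?_⟩
    rintro b x (h | ⟨h, rfl⟩)
    · exact (hm.1.2 b x h).mono hsub hd'
    · exact hs x h
  have hle := hm.2 hv hsub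
  rw [Set.eq_empty_iff_forall_notMem]
  intro x hx
  exact Set.disjoint_left.1 (hd (f x)) (hle (f x) (Or.inr ⟨hx, rfl⟩)) hx

theorem nb_extA {V : Type u} (G : SimpleGraph V) {A : Bool → Set V} {K : Set V} (f : V → Bool)
    (hd : ∀ b, Disjoint (A b) K) (x : V) (b : Bool) :
    nb G x (extA A K f b) = nb G x (A b) + nb G x {y | y ∈ K ∧ f y = b} :=
  nb_union G x ((hd b).mono_right fun _ h => h.1)

theorem enat_conditions
    (hyp : ∀ (V : Type u) (G : SimpleGraph V), Countable V →
      (∀ W : Set V, (∀ x ∈ W, (G.neighborSet x ∩ W).Infinite) → W = ∅) →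
      ∃ π : V → Fin 2, UnfriendlyPartition G π)
    (V : Type u) (G : SimpleGraph V) (C : V → Bool → ℕ∞) :
    ∃ π : V → Bool, ∀ x, C x (π x) + nb G x {y | π y = π x} ≤
      C x (!π x) + nb G x {y | π y = !π x} := by
  classical
  obtain ⟨A, hA⟩ : ∃ A, Maximal (Valid G C) A := by
    refine zorn_le₀ (Set.ofPred (Valid G C)) ?_
    intro c hc hch
    have hle : ∀ A ∈ c, ∀ b, A b ⊆ ⋃ A ∈ c, A b := fun A hA b =>
      Set.subset_biUnion_of_mem (u := fun A : Bool → Set V => A b) hA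
    have hd : ∀ b, Disjoint (⋃ A ∈ c, A b) (⋃ A ∈ c, A !b) := by
      intro b
      rw [Set.disjoint_left]
      intro x hx hx'
      simp only [Set.mem_iUnion, exists_prop] at hx hx'
      obtain ⟨A, hA, hxA⟩ := hx
      obtain ⟨B, hB, hxB⟩ := hx'
      rcases hch.total hA hB with h | h
      · exact Set.disjoint_left.1 ((hc hB).1 b) (h b hxA) hxB
      · exact Set.disjoint_left.1 ((hc hA).1 b) hxA (h _ hxB)
    refine ⟨fun b => ⋃ A ∈ c, A b, ⟨hd, ?_⟩, fun A hA b => hle A hA b⟩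
    intro b x hx
    simp only [Set.mem_iUnion, exists_prop] at hx
    obtain ⟨A, hA, hxA⟩ := hx
    exact ((hc hA).2 b x hxA).mono (hle A hA) hd
  -- every vertex is coloured
  have hall : ∀ x, ∃ b, x ∈ A b := by
    by_contra hcon
    push Not at hcon
    obtain ⟨x0, hx0⟩ := hcon
    let R : Set V := {x | ∀ b, x ∉ A b}
    have hdR : ∀ K ⊆ R, ∀ b, Disjoint (A b) K := by
      intro K hK b
      rw [Set.disjoint_left]
      exact fun x hx hxK => hK hxK b hx
    have hfin : ∀ x ∈ R, ∀ b, C x b + nb G x (A b) ≠ ⊤ := by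
      intro x hx b htop
      have := max_contra hA {x} (fun _ => !b) (hdR _ (by simpa using hx)) (by
        rintro z rfl
        left
        rw [eq_top_iff, Bool.not_not, ← htop]
        exact add_le_add le_rfl (nb_mono G z Set.subset_union_left))
      simp at this
    have hclass : ∀ W ⊆ R, W.Countable → (∀ x ∈ W, (G.neighborSet x ∩ W).Infinite) → W = ∅ := by
      intro W hWR hWc hW
      obtain ⟨f, hf⟩ := two_colour G W hWc hW
      refine max_contra hA W f (hdR _ hWR) ?_
      intro x hx
      left
      have : nb G x (extA A W f (!f x)) = ⊤ := by
        rw [nb_extA G f (hdR _ hWR)]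
        have : nb G x {y | y ∈ W ∧ f y = !f x} = ⊤ := Set.encard_eq_top (hf x hx (!f x))
        rw [this, add_top]
      rw [this, add_top]
    obtain ⟨K, hKc, hKR, hxK, hK⟩ := countable_closure G R x0 hx0
    have hKd := hdR K hKR
    obtain ⟨ρ, hρ⟩ := finite_conditions hyp K (G.comap Subtype.val) hKc.to_subtype (by
      intro W hW
      have := hclass (Subtype.val '' W) (by rintro _ ⟨x, _, rfl⟩; exact hKR x.2)
        (hKc.mono (by rintro _ ⟨x, _, rfl⟩; exact x.2)) (by
          rintro _ ⟨x, hx, rfl⟩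
          refine ((hW x hx).image Subtype.val_injective.injOn).mono ?_
          rintro _ ⟨y, ⟨hy, hyW⟩, rfl⟩
          exact ⟨hy, y, hyW, rfl⟩)
      simpa using this) (fun x b => (C x b + nb G x (A b)).toNat)
    let f : V → Bool := fun x => if h : x ∈ K then ρ ⟨x, h⟩ else true
    have hf : ∀ x : K, f x = ρ x := fun x => by simp [f]
    have hcount : ∀ (x : K) (b : Bool),
        {z : K | (G.comap Subtype.val).Adj x z ∧ ρ z = b}.encard =
          nb G x {y | y ∈ K ∧ f y = b} := by
      intro x b
      rw [← Subtype.val_injective.encard_image]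
      unfold nb
      congr 1
      ext y
      constructor
      · rintro ⟨z, ⟨hz, hzb⟩, rfl⟩
        exact ⟨hz, z.2, by rw [hf, hzb]⟩
      · rintro ⟨hy, hyK, hyb⟩
        exact ⟨⟨y, hyK⟩, ⟨hy, by rw [← hf]; exact hyb⟩, rfl⟩
    have hgood : ∀ x ∈ K, C x (f x) + nb G x (extA A K f (f x)) ≤
        C x (!f x) + nb G x (extA A K f (!f x)) := by
      intro x hx
      have h := hρ ⟨x, hx⟩
      rw [hcount, hcount, ENat.natCast_toNat (hfin x (hKR hx) _),
        ENat.natCast_toNat (hfin x (hKR hx) _), ← hf] at h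
      rw [nb_extA G f hKd, nb_extA G f hKd, ← add_assoc, ← add_assoc]
      exact h
    have := max_contra hA K f hKd (by
      intro x hx
      rcases hK x hx with h | h
      · right
        refine ⟨fun y hy => ?_, hgood x hx⟩
        by_cases hyR : y ∈ R
        · exact ⟨f y, Or.inr ⟨h y hyR hy, rfl⟩⟩
        · simp only [R, Set.mem_ofPred_eq, not_forall, not_not] at hyR
          exact hyR.imp fun b hb => Or.inl hb
      · left
        have h1 : nb G x K = ⊤ := Set.encard_eq_top h
        have h2 : nb G x K ≤ nb G x (extA A K f (f x)) + nb G x (extA A K f (!f x)) := by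
          refine le_trans (nb_mono G x (T := extA A K f (f x) ∪ extA A K f (!f x)) ?_) ?_
          · intro y hy
            by_cases hyx : f y = f x
            · exact Or.inl (Or.inr ⟨hy, hyx⟩)
            · refine Or.inr (Or.inr ⟨hy, ?_⟩)
              revert hyx
              cases f y <;> cases f x <;> simp
          · unfold nb
            rw [Set.inter_union_distrib_left]
            exact Set.encard_union_le _ _
        rw [h1, top_le_iff, ENat.add_eq_top] at h2
        rcases h2 with h2 | h2
        · have := hgood x hx
          rw [h2, add_top, top_le_iff] at this
          exact this
        · rw [h2, add_top])
    rw [this] at hxK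
    exact hxK
  choose π hπ using hall
  have hAπ : ∀ b, A b = {y | π y = b} := by
    intro b
    ext y
    constructor
    · intro hy
      by_contra hne
      have : π y = !b := by
        revert hne
        show π y ≠ b → _
        cases π y <;> cases b <;> simp
      have h' := hπ y
      rw [this] at h'
      exact Set.disjoint_left.1 (hA.1.1 b) hy h'
    · rintro rfl
      exact hπ y
  refine ⟨π, fun x => ?_⟩
  rw [← hAπ, ← hAπ]
  rcases hA.1.2 _ x (hπ x) with h | h
  · rw [h]; exact le_top
  · exact h.2

theorem card_of_enat {a b : Cardinal.{u}} (h : toENat a ≤ toENat b) :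
    a ≤ b ∨ (ℵ₀ ≤ a ∧ ℵ₀ ≤ b) := by
  rcases lt_or_ge b ℵ₀ with hb | hb
  · exact Or.inl ((toENat_le_iff_of_lt_aleph0 hb).1 h)
  · rcases lt_or_ge a ℵ₀ with ha | ha
    · exact Or.inl (ha.le.trans hb)
    · exact Or.inr ⟨ha, hb⟩

theorem stmt13
    (hyp : ∀ (V : Type u) (G : SimpleGraph V), Countable V →
      (∀ W : Set V, (∀ x ∈ W, (G.neighborSet x ∩ W).Infinite) → W = ∅) →
      ∃ π : V → Fin 2, UnfriendlyPartition G π) :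
    ∀ (V : Type u) (G : SimpleGraph V) (C : V → Cardinal.{u} × Cardinal.{u}),
      ∃ π : V → Fin 2, CondMuUnfriendly G C ℵ₀ π := by
  intro V G C
  obtain ⟨q, hq⟩ := enat_conditions hyp V G
    (fun x b => if b then toENat (C x).2 else toENat (C x).1)
  refine ⟨fun x => if q x then 1 else 0, fun x => ?_⟩
  have e0 : toENat #{y : V // G.Adj x y ∧ (if q y then (1 : Fin 2) else 0) = 0} =
      nb G x {y | q y = false} := by
    rw [Set.toENat_cardinalMk_subtype]
    unfold nb
    congr 1
    ext y
    cases h : q y <;> simp [h]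
  have e1 : toENat #{y : V // G.Adj x y ∧ (if q y then (1 : Fin 2) else 0) = 1} =
      nb G x {y | q y = true} := by
    rw [Set.toENat_cardinalMk_subtype]
    unfold nb
    congr 1
    ext y
    cases h : q y <;> simp [h]
  have hx := hq x
  refine ⟨fun h => ?_, fun h => ?_⟩
  · have hqx : q x = false := by
      cases h' : q x
      · rfl
      · simp [h'] at h
    apply card_of_enat
    rw [map_add, map_add, e0, e1]
    simpa [hqx] using hx
  · have hqx : q x = true := by
      cases h' : q x
      · simp [h'] at h
      · rfl
    refine (card_of_enat ?_).imp id And.symm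
    rw [map_add, map_add, e0, e1]
    simpa [hqx] using hx
end
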